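/- arXiv:1003.5176 — 3 statements merged into one kernel-verified Lean document; each statement's English description precedes it below -/
import Mathlib

section
/- Let Z be a real Banach space with a Schauder basis (z_i)_{i≥0} consisting of norm-one vectors such that the partial sums ∑_{i=1}^{k} z_i, k ≥ 1, are uniformly bounded in norm, and let (z_i*) ⊆ Z* be the biorthogonal coordinate functionals. Let (α_j)_{j≥1} be a strictly increasing sequence of positive reals with limit 1, let (β_j)_{j≥1} be a strictly increasing sequence of positive reals with limit ∞, and let (ℕ_j)_{j≥1} be pairwise disjoint infinite subsets of ℕ. Let A ⊆ Z* be the convex hull of the set { α_j z_0* + β_j z_k* : j ≥ 1, k ∈ ℕ_j }. Then z_0* does not belong to the weak* derived set A^(1); in particular, since z_0* lies in the norm closure of A^(1), the set A^(1) is strictly contained in the weak* closure of A. -/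
open NormedSpace

/-- The weak* derived set of a subset of the dual. -/
noncomputable def wStarDerived {X : Type*} [NormedAddCommGroup X] [NormedSpace ℝ X]
    (A : Set (StrongDual ℝ X)) : Set (StrongDual ℝ X) :=
  ⋃ n : ℕ, {f : StrongDual ℝ X |
    StrongDual.toWeakDual f ∈ closure (StrongDual.toWeakDual '' (A ∩ {g : StrongDual ℝ X | ‖g‖ ≤ n}))}

/-- The weak* closure. -/
noncomputable def wStarClosure {X : Type*} [NormedAddCommGroup X] [NormedSpace ℝ X]
    (A : Set (StrongDual ℝ X)) : Set (StrongDual ℝ X) :=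
  {f : StrongDual ℝ X | StrongDual.toWeakDual f ∈ closure (StrongDual.toWeakDual '' A)}

/-- Quasi-reflexivity. -/
def QuasiReflexive (X : Type*) [NormedAddCommGroup X] [NormedSpace ℝ X] : Prop :=
  FiniteDimensional ℝ
    (StrongDual ℝ (StrongDual ℝ X) ⧸ LinearMap.range ((inclusionInDoubleDual ℝ X) : X →ₗ[ℝ] StrongDual ℝ (StrongDual ℝ X)))

/-- Restriction map to a subspace. -/
noncomputable def restrictMap {X : Type*} [NormedAddCommGroup X] [NormedSpace ℝ X]
    (Z : Submodule ℝ X) (f : StrongDual ℝ X) : StrongDual ℝ Z :=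
  f.comp Z.subtypeL

/-- In the setting of the construction of Theorem 2: $z_0^*$ does not belong to the weak*
derived set $A^{(1)}$; moreover $z_0^*$ lies in the norm closure of $A^{(1)}$, and hence
$A^{(1)}$ is strictly contained in the weak* closure of $A$. -/
theorem stmt11 (Z : Type*) [NormedAddCommGroup Z] [NormedSpace ℝ Z] [CompleteSpace Z]
    (z : ℕ → Z) (zstar : ℕ → StrongDual ℝ Z)
    (hbi : ∀ i j, zstar i (z j) = if i = j then 1 else 0)
    (hexp : ∀ w : Z, Filter.Tendsto (fun k => ∑ i ∈ Finset.range k, zstar i w • z i)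
      Filter.atTop (nhds w))
    (hnorm : ∀ i, ‖z i‖ = 1)
    (hps : ∃ M : ℝ, ∀ k : ℕ, 1 ≤ k → ‖∑ i ∈ Finset.Icc 1 k, z i‖ ≤ M)
    (α β : ℕ → ℝ)
    (hαmono : StrictMono α) (hαpos : ∀ j, 0 < α j)
    (hα1 : Filter.Tendsto α Filter.atTop (nhds 1))
    (hβmono : StrictMono β) (hβpos : ∀ j, 0 < β j)
    (hβ : Filter.Tendsto β Filter.atTop Filter.atTop)
    (N : ℕ → Set ℕ) (hNdisj : Pairwise (Function.onFun Disjoint N))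
    (hNinf : ∀ j, (N j).Infinite) (hN0 : ∀ j, 0 ∉ N j)
    (A : Set (StrongDual ℝ Z))
    (hA : A = convexHull ℝ
      {f : StrongDual ℝ Z | ∃ j k : ℕ, k ∈ N j ∧ f = α j • zstar 0 + β j • zstar k}) :
    zstar 0 ∉ wStarDerived A ∧
    zstar 0 ∈ closure (wStarDerived A) ∧
    wStarDerived A ⊂ wStarClosure A := by
  classical
  have hαlt : ∀ j, α j < 1 := fun j =>
    lt_of_lt_of_le (hαmono (Nat.lt_succ_self j)) (hαmono.monotone.ge_of_tendsto hα1 _)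
  have hzS : ∀ k, k ≠ 0 → ∀ K, k ≤ K → zstar k (∑ i ∈ Finset.Icc 1 K, z i) = 1 := by
    intro k hk K hK
    rw [map_sum]
    simp only [hbi]
    rw [Finset.sum_ite_eq, if_pos]
    exact Finset.mem_Icc.2 ⟨Nat.one_le_iff_ne_zero.2 hk, hK⟩
  have hz0S : ∀ K, zstar 0 (∑ i ∈ Finset.Icc 1 K, z i) = 0 := by
    intro K
    rw [map_sum]
    simp only [hbi]
    rw [Finset.sum_ite_eq, if_neg]
    simp
  have h1 : zstar 0 ∉ wStarDerived A := by
    intro hmem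
    simp only [wStarDerived, Set.mem_iUnion, Set.mem_ofPred_eq] at hmem
    obtain ⟨n, hn⟩ := hmem
    obtain ⟨M, hM⟩ := hps
    obtain ⟨J, hJ⟩ := (hβ.eventually_gt_atTop ((n : ℝ) * M)).exists
    have hJ1 : 0 < 1 - α J := sub_pos.2 (hαlt J)
    obtain ⟨b, hb⟩ : ∃ b, b = β J / (1 - α J) := ⟨_, rfl⟩
    have hbJ : b * (1 - α J) = β J := by rw [hb]; field_simp
    have hbpos : 0 < b := by rw [hb]; exact div_pos (hβpos J) hJ1
    have hconv : Convex ℝ {f : StrongDual ℝ Z |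
        ∀ᶠ K in Filter.atTop, β J - b + b * f (z 0) ≤ f (∑ i ∈ Finset.Icc 1 K, z i)} := by
      intro f hf g hg s t hs ht hst
      simp only [Set.mem_ofPred_eq] at hf hg ⊢
      filter_upwards [hf, hg] with K hfK hgK
      simp only [add_apply, smul_apply, smul_eq_mul]
      have e1 := mul_le_mul_of_nonneg_left hfK hs
      have e2 := mul_le_mul_of_nonneg_left hgK ht
      have e3 : t = 1 - s := by linarith
      subst e3
      linarith
    have hAsub : A ⊆ {f : StrongDual ℝ Z |
        ∀ᶠ K in Filter.atTop, β J - b + b * f (z 0) ≤ f (∑ i ∈ Finset.Icc 1 K, z i)} := by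
      rw [hA]
      refine convexHull_min ?_ hconv
      rintro f ⟨j, k, hk, rfl⟩
      have hk0 : k ≠ 0 := fun h => hN0 j (h ▸ hk)
      simp only [Set.mem_ofPred_eq]
      filter_upwards [Filter.eventually_ge_atTop k] with K hK
      simp only [add_apply, smul_apply, smul_eq_mul]
      rw [hzS k hk0 K hK, hz0S, hbi, hbi, if_pos rfl, if_neg hk0]
      rcases le_total J j with hj | hj
      · have e1 := hβmono.monotone hj
        have e2 := mul_pos hbpos (sub_pos.2 (hαlt j))
        linarith
      · have e1 := hβpos j
        have e2 := mul_le_mul_of_nonneg_left (hαmono.monotone hj) hbpos.le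
        linarith
    have hcl : IsClosed {f : WeakDual ℝ Z | β J - b + b * f (z 0) ≤ n * M} := by
      refine isClosed_le ?_ continuous_const
      exact continuous_const.add (continuous_const.mul (WeakDual.eval_continuous (z 0)))
    have hsub : StrongDual.toWeakDual '' (A ∩ {g : StrongDual ℝ Z | ‖g‖ ≤ n}) ⊆
        {f : WeakDual ℝ Z | β J - b + b * f (z 0) ≤ n * M} := by
      rintro _ ⟨f, ⟨hfA, hfn⟩, rfl⟩
      obtain ⟨K, hK, hK1⟩ := ((hAsub hfA).and (Filter.eventually_ge_atTop 1)).exists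
      change β J - b + b * f (z 0) ≤ n * M
      refine hK.trans ((le_abs_self _).trans ?_)
      refine (f.le_opNorm _).trans ?_
      exact mul_le_mul hfn (hM K hK1) (norm_nonneg _) (Nat.cast_nonneg _)
    have h := closure_minimal hsub hcl hn
    change β J - b + b * zstar 0 (z 0) ≤ n * M at h
    rw [hbi, if_pos rfl] at h
    linarith
  have hzw : ∀ w, Filter.Tendsto (fun k => zstar k w) Filter.atTop (nhds 0) := by
    intro w
    have e := ((hexp w).comp (Filter.tendsto_add_atTop_nat 1)).sub (hexp w)
    rw [sub_self] at e
    have e2 := e.norm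
    rw [norm_zero] at e2
    rw [tendsto_zero_iff_norm_tendsto_zero]
    refine e2.congr fun k => ?_
    simp [Finset.sum_range_succ, norm_smul, hnorm]
  obtain ⟨C, hC⟩ : ∃ C, ∀ k, ‖zstar k‖ ≤ C := by
    refine banach_steinhaus fun w => ?_
    obtain ⟨C, hC⟩ := (hzw w).norm.bddAbove_range
    exact ⟨C, fun k => hC ⟨k, rfl⟩⟩
  have h2 : ∀ j, α j • zstar 0 ∈ wStarDerived A := by
    intro j
    obtain ⟨n, hn⟩ := exists_nat_ge (α j * C + β j * C)
    refine Set.mem_iUnion.2 ⟨n, ?_⟩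
    simp only [Set.mem_ofPred_eq]
    have hid : StrictMono (Nat.nth (· ∈ N j)) := Nat.nth_strictMono (hNinf j)
    refine mem_closure_of_tendsto (f := fun m => StrongDual.toWeakDual
      (α j • zstar 0 + β j • zstar (Nat.nth (· ∈ N j) m))) (b := Filter.atTop) ?_ ?_
    · refine (WeakBilin.tendsto_iff_forall_eval_tendsto (topDualPairing ℝ Z) ContinuousLinearMap.coe_injective).2 ?_
      intro w
      change Filter.Tendsto (fun m => α j * zstar 0 w + β j * zstar (Nat.nth (· ∈ N j) m) w) _
        (nhds (α j * zstar 0 w))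
      have := (((hzw w).comp hid.tendsto_atTop).const_mul (β j)).const_add (α j * zstar 0 w)
      rw [mul_zero, add_zero] at this
      exact this
    · refine Filter.Eventually.of_forall fun m => ⟨_, ⟨?_, ?_⟩, rfl⟩
      · rw [hA]
        exact subset_convexHull ℝ _ ⟨j, _, Nat.nth_mem_of_infinite (hNinf j) m, rfl⟩
      · simp only [Set.mem_ofPred_eq]
        refine (norm_add_le _ _).trans (le_trans ?_ hn)
        rw [norm_smul, norm_smul, Real.norm_of_nonneg (hαpos j).le,
          Real.norm_of_nonneg (hβpos j).le]
        exact add_le_add (mul_le_mul_of_nonneg_left (hC _) (hαpos j).le)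
          (mul_le_mul_of_nonneg_left (hC _) (hβpos j).le)
  have hlim : Filter.Tendsto (fun j => α j • zstar 0) Filter.atTop (nhds (zstar 0)) := by
    simpa using hα1.smul_const (zstar 0)
  have hsub : wStarDerived A ⊆ wStarClosure A := by
    intro f hf
    simp only [wStarDerived, Set.mem_iUnion, Set.mem_ofPred_eq] at hf
    obtain ⟨n, hf⟩ := hf
    simp only [wStarClosure, Set.mem_ofPred_eq]
    exact closure_mono (Set.image_mono Set.inter_subset_left) hf
  refine ⟨h1, mem_closure_of_tendsto hlim (Filter.Eventually.of_forall h2), ?_⟩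
  refine (Set.ssubset_iff_of_subset hsub).2 ⟨zstar 0, ?_, h1⟩
  have hcont := ((NormedSpace.Dual.toWeakDual_continuous (𝕜 := ℝ) (E := Z)).tendsto (zstar 0)).comp hlim
  have hmem : ∀ j, StrongDual.toWeakDual (α j • zstar 0) ∈
      closure (StrongDual.toWeakDual '' A) := fun j => hsub (h2 j)
  have hfin := (isClosed_closure (s := StrongDual.toWeakDual '' A)).mem_of_tendsto hcont
    (Filter.Eventually.of_forall hmem)
  exact hfin
end

section
/- Let U be a real Banach space with a Schauder basis (u_i)_{i≥0} whose biorthogonal coordinate functionals (u_i*) ⊆ U* are uniformly bounded in norm, and let (c_i)_{i≥0} be a sequence of nonnegative reals with ∑_{i=0}^∞ c_i < ∞. Then the set T = { u* ∈ U* : |u*(u_i)| ≤ c_i for all i ≥ 0 } is norm-compact in U*. -/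
open NormedSpace

/-- If $U$ has a Schauder basis $(u_i)$ with uniformly bounded coordinate functionals and
$\sum_i c_i < \infty$ with $c_i \ge 0$, then
$T = \{u^* \in U^* : |u^*(u_i)| \le c_i \text{ for all } i\}$ is norm-compact. -/
theorem stmt12 (U : Type*) [NormedAddCommGroup U] [NormedSpace ℝ U] [CompleteSpace U]
    (u : ℕ → U) (ustar : ℕ → StrongDual ℝ U)
    (hbi : ∀ i j, ustar i (u j) = if i = j then 1 else 0)
    (hexp : ∀ w : U, Filter.Tendsto (fun k => ∑ i ∈ Finset.range k, ustar i w • u i)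
      Filter.atTop (nhds w))
    (hbdd : ∃ C : ℝ, ∀ i, ‖ustar i‖ ≤ C)
    (c : ℕ → ℝ) (hc : ∀ i, 0 ≤ c i) (hsum : Summable c) :
    IsCompact {f : StrongDual ℝ U | ∀ i, |f (u i)| ≤ c i} := by
  obtain ⟨C, hC⟩ := hbdd
  have hbound : ∀ a : ℕ → ℝ, (∀ i, |a i| ≤ c i) → ∀ i, ‖a i • ustar i‖ ≤ c i * C := by
    intro a ha i
    rw [norm_smul, Real.norm_eq_abs]
    exact mul_le_mul (ha i) (hC i) (norm_nonneg _) (hc i)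
  have hsumC : Summable (fun i => c i * C) := hsum.mul_right C
  have hs : ∀ a : ℕ → ℝ, (∀ i, |a i| ≤ c i) → Summable (fun i => a i • ustar i) :=
    fun a ha => Summable.of_norm_bounded hsumC (hbound a ha)
  have happ : ∀ a : ℕ → ℝ, (∀ i, |a i| ≤ c i) → ∀ w : U,
      HasSum (fun i => a i * ustar i w) ((∑' i, a i • ustar i) w) := by
    intro a ha w
    have h := (hs a ha).hasSum.mapL (ContinuousLinearMap.apply ℝ ℝ w)
    simpa using h
  have hK : IsCompact (Set.pi Set.univ (fun i => Set.Icc (-c i) (c i))) :=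
    isCompact_univ_pi (fun i => isCompact_Icc)
  have hmem : ∀ a : ℕ → ℝ, a ∈ Set.pi Set.univ (fun i => Set.Icc (-c i) (c i)) ↔
      ∀ i, |a i| ≤ c i := by
    intro a
    simp only [Set.mem_pi, Set.mem_univ, true_imp_iff, Set.mem_Icc, abs_le]
  have hcont : ContinuousOn (fun a : ℕ → ℝ => ∑' i, a i • ustar i)
      (Set.pi Set.univ (fun i => Set.Icc (-c i) (c i))) := by
    refine continuousOn_tsum (u := fun i => c i * C) (fun i => ?_) hsumC ?_
    · exact ((continuous_apply i).smul continuous_const).continuousOn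
    · intro i a ha
      exact hbound a ((hmem a).1 ha) i
  have himg := hK.image_of_continuousOn hcont
  convert himg using 1
  ext f
  constructor
  · intro hf
    refine ⟨fun i => f (u i), (hmem _).2 hf, ?_⟩
    ext w
    have h1 := (happ (fun i => f (u i)) hf w).tendsto_sum_nat
    have h2 := (f.continuous.tendsto w).comp (hexp w)
    refine tendsto_nhds_unique h1 (h2.congr fun k => ?_)
    simp [map_sum, mul_comm]
  · rintro ⟨a, ha, rfl⟩ j
    have ha' := (hmem a).1 ha
    have h1 := happ a ha' (u j)
    have h2 : HasSum (fun i => a i * ustar i (u j)) (a j) := by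
      convert hasSum_ite_eq j (a j) using 2 with i
      rw [hbi]
      by_cases hij : i = j
      · simp [hij]
      · simp [hij]
    have h3 := h1.unique h2
    simp only [h3]
    exact ha' j
end

section
/- Let Z be a closed linear subspace of a real Banach space X, let E* : X* → Z* be the restriction map, let A ⊆ X* be a linear subspace, and suppose there is a norm-compact set K ⊆ Z* such that E*(A ∩ B_{X*}) ⊆ K. Then E*(A^(1)) is contained in the closed linear span of K in Z*. In particular, if Z* is not separable, then A^(1) is not norm-dense in X*. -/
open NormedSpace

/-- If $A \subset X^*$ is a linear subspace, $Z \subset X$ a closed subspace, and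
$E^*(A \cap B_{X^*})$ is contained in a norm-compact set $K \subset Z^*$, then
$E^*(A^{(1)})$ is contained in the closed linear span of $K$; in particular if $Z^*$
is not separable then $A^{(1)}$ is not norm-dense in $X^*$. -/
theorem stmt14 (X : Type*) [NormedAddCommGroup X] [NormedSpace ℝ X] [CompleteSpace X]
    (Z : Submodule ℝ X) (hZ : IsClosed (Z : Set X))
    (A : Submodule ℝ (StrongDual ℝ X)) (K : Set (StrongDual ℝ Z)) (hK : IsCompact K)
    (hsub : restrictMap Z '' ((A : Set (StrongDual ℝ X)) ∩ {g : StrongDual ℝ X | ‖g‖ ≤ 1}) ⊆ K) :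
    restrictMap Z '' wStarDerived (A : Set (StrongDual ℝ X)) ⊆
      closure (Submodule.span ℝ K : Set (StrongDual ℝ Z)) ∧
    (¬ TopologicalSpace.SeparableSpace (StrongDual ℝ Z) →
      ¬ Dense (wStarDerived (A : Set (StrongDual ℝ X)))) := by
  have hcont : Continuous (restrictMap Z) := by
    have h : restrictMap Z = fun f : StrongDual ℝ X =>
        (ContinuousLinearMap.precomp ℝ Z.subtypeL) f := rfl
    rw [h]
    exact ContinuousLinearMap.continuous _
  have h1 : restrictMap Z '' wStarDerived (A : Set (StrongDual ℝ X)) ⊆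
      (Submodule.span ℝ K : Set (StrongDual ℝ Z)) := by
    rintro _ ⟨f, hf, rfl⟩
    obtain ⟨n, hn⟩ := Set.mem_iUnion.1 hf
    let R : WeakDual ℝ X → WeakDual ℝ Z := fun g =>
      StrongDual.toWeakDual (restrictMap Z (WeakDual.toStrongDual g))
    have hR : Continuous R := by
      refine WeakDual.continuous_of_continuous_eval fun z => ?_
      exact WeakDual.eval_continuous (z : X)
    have hpos : (0 : ℝ) < (n : ℝ) + 1 := by positivity
    let K' : Set (StrongDual ℝ Z) := (fun k => ((n : ℝ) + 1) • k) '' K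
    have hK' : IsCompact K' := hK.image (continuous_const_smul _)
    have hKw : IsClosed (StrongDual.toWeakDual '' K' : Set (WeakDual ℝ Z)) :=
      (hK'.image NormedSpace.Dual.toWeakDual_continuous).isClosed
    have hmaps : Set.MapsTo R
        (StrongDual.toWeakDual '' ((A : Set (StrongDual ℝ X)) ∩ {g | ‖g‖ ≤ n}))
        (StrongDual.toWeakDual '' K') := by
      rintro _ ⟨g, ⟨hgA, hgn⟩, rfl⟩
      refine ⟨restrictMap Z g, ⟨restrictMap Z (((n : ℝ) + 1)⁻¹ • g), ?_, ?_⟩, rfl⟩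
      · refine hsub ⟨_, ⟨A.smul_mem _ hgA, ?_⟩, rfl⟩
        have hgn' : ‖g‖ ≤ n := hgn
        show ‖((n : ℝ) + 1)⁻¹ • g‖ ≤ 1
        rw [norm_smul, norm_inv, Real.norm_of_nonneg hpos.le, inv_mul_le_iff₀ hpos]
        linarith
      · ext z
        simp [restrictMap, mul_inv_cancel_left₀ hpos.ne']
    have hmem := hmaps.closure hR hn
    rw [hKw.closure_eq] at hmem
    obtain ⟨_, ⟨k, hk, rfl⟩, hkf⟩ := hmem
    have hkf' : ((n : ℝ) + 1) • k = restrictMap Z f := StrongDual.toWeakDual.injective hkf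
    rw [← hkf']
    exact Submodule.smul_mem _ _ (Submodule.subset_span hk)
  refine ⟨h1.trans subset_closure, fun hns hd => hns ?_⟩
  have hsurj : Function.Surjective (restrictMap Z) := by
    intro g
    obtain ⟨f, hf, -⟩ := exists_extension_norm_eq Z g
    exact ⟨f, ContinuousLinearMap.ext hf⟩
  have hd2 : Dense (Submodule.span ℝ K : Set (StrongDual ℝ Z)) :=
    (hsurj.denseRange.dense_image hcont hd).mono h1
  have hpm : TopologicalSpace.PseudoMetrizableSpace (StrongDual ℝ Z) :=
    @PseudoEMetricSpace.pseudoMetrizableSpace (StrongDual ℝ Z)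
      (inferInstance : SeminormedAddCommGroup (StrongDual ℝ Z)).toPseudoMetricSpace.toPseudoEMetricSpace
  have hKs : TopologicalSpace.IsSeparable K := hK.isSeparable
  have hsep : TopologicalSpace.IsSeparable (Submodule.span ℝ K : Set (StrongDual ℝ Z)) :=
    hKs.span
  rw [← TopologicalSpace.isSeparable_univ_iff, ← hd2.closure_eq]
  exact hsep.closure
end
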